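/- arXiv:0709.3803 — 5 statements merged into one kernel-verified Lean document; each statement's English description precedes it below -/
import Mathlib

section
/- Let k be a field, S a group, and let V and W be finite-dimensional k-vector spaces equipped with k-linear S-actions. Let f : V → W be a surjective S-equivariant k-linear map. If the quotient S-module V/V^S has no trivial composition factor (i.e., there do not exist S-submodules A ⊆ B of V/V^S with A ≠ B such that S acts trivially on B/A), then f maps V^S onto W^S, that is, f(V^S) = W^S. -/
/-- A `k`-submodule `p` of `V` is an `S`-submodule (subrepresentation) for the
representation `ρ` if it is stable under the action of every element of `S`. -/
def IsSubrep {k S V : Type*} [CommRing k] [Group S] [AddCommGroup V] [Module k V]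
    (ρ : Representation k S V) (p : Submodule k V) : Prop :=
  ∀ (s : S), ∀ v ∈ p, ρ s v ∈ p

/-- The submodule `V^S` of `S`-fixed vectors of the representation `ρ`. -/
def fixedSubmodule {k S V : Type*} [CommRing k] [Group S] [AddCommGroup V] [Module k V]
    (ρ : Representation k S V) : Submodule k V where
  carrier := {v | ∀ s : S, ρ s v = v}
  add_mem' := by
    intro a b ha hb s
    rw [map_add, ha s, hb s]
  zero_mem' := fun s => map_zero (ρ s)
  smul_mem' := by
    intro c v hv s
    rw [map_smul, hv s]

theorem fixedSubmodule_isSubrep {k S V : Type*} [CommRing k] [Group S] [AddCommGroup V]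
    [Module k V] (ρ : Representation k S V) : IsSubrep ρ (fixedSubmodule ρ) := by
  intro s v hv
  rw [hv s]
  exact hv

/-- An `S`-module has a trivial composition factor if there are `S`-submodules
`A ⊆ B` with `A ≠ B` such that `S` acts trivially on `B/A`. -/
def HasTrivialCompositionFactor {k S V : Type*} [CommRing k] [Group S] [AddCommGroup V]
    [Module k V] (ρ : Representation k S V) : Prop :=
  ∃ A B : Submodule k V, IsSubrep ρ A ∧ IsSubrep ρ B ∧ A ≤ B ∧ A ≠ B ∧
    ∀ (s : S), ∀ v ∈ B, ρ s v - v ∈ A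

/-- The induced representation on a quotient by an `S`-stable submodule. -/
def quotRep {k S V : Type*} [CommRing k] [Group S] [AddCommGroup V] [Module k V]
    (ρ : Representation k S V) (N : Submodule k V) (hN : IsSubrep ρ N) :
    Representation k S (V ⧸ N) where
  toFun s := N.mapQ N (ρ s) (fun v hv => hN s v hv)
  map_one' := by
    refine LinearMap.ext fun x => ?_
    obtain ⟨v, rfl⟩ := Submodule.Quotient.mk_surjective N x
    simp [Submodule.mapQ_apply]
  map_mul' s t := by
    refine LinearMap.ext fun x => ?_
    obtain ⟨v, rfl⟩ := Submodule.Quotient.mk_surjective N x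
    simp [Submodule.mapQ_apply, Module.End.mul_apply]

/-!
Equivariance makes the preimage `B = f⁻¹(W^S)` the set of vectors that `S` moves only within
`A = ker f`, so `S` acts trivially on `B/A`, and hence on `(B + V^S)/(A + V^S)`. As a subquotient
of `V/V^S` the latter is zero, so `B ≤ V^S + ker f`, and applying `f` gives
`W^S ∩ range f ≤ f(V^S)`.
-/

section

variable {k S V W : Type*} [CommRing k] [Group S]
  [AddCommGroup V] [Module k V] [AddCommGroup W] [Module k W]
  {ρ : Representation k S V} {σ : Representation k S W}

theorem isSubrep_iff_forall_sub_mem {p : Submodule k V} :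
    IsSubrep ρ p ↔ ∀ s : S, ∀ v ∈ p, ρ s v - v ∈ p :=
  forall₃_congr fun _ _ hv => (p.sub_mem_iff_left hv).symm

theorem eq_of_not_hasTrivialCompositionFactor (hρ : ¬ HasTrivialCompositionFactor ρ)
    {A B : Submodule k V} (hAB : A ≤ B) (htriv : ∀ s : S, ∀ v ∈ B, ρ s v - v ∈ A) : A = B := by
  by_contra hne
  have hA : IsSubrep ρ A := isSubrep_iff_forall_sub_mem.2 fun s v hv => htriv s v (hAB hv)
  have hB : IsSubrep ρ B := isSubrep_iff_forall_sub_mem.2 fun s v hv => hAB (htriv s v hv)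
  exact hρ ⟨A, B, hA, hB, hAB, hne, htriv⟩

theorem le_sup_of_not_hasTrivialCompositionFactor_quotRep {N : Submodule k V}
    {hN : IsSubrep ρ N} (hquot : ¬ HasTrivialCompositionFactor (quotRep ρ N hN))
    {A B : Submodule k V} (hAB : A ≤ B) (htriv : ∀ s : S, ∀ v ∈ B, ρ s v - v ∈ A) :
    B ≤ N ⊔ A := by
  have himage : A.map N.mkQ = B.map N.mkQ := by
    refine eq_of_not_hasTrivialCompositionFactor hquot (Submodule.map_mono hAB) ?_
    rintro s _ ⟨v, hv, rfl⟩
    exact ⟨ρ s v - v, htriv s v hv, map_sub N.mkQ (ρ s v) v⟩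
  calc
    B ≤ (B.map N.mkQ).comap N.mkQ := Submodule.le_comap_map N.mkQ B
    _ = (A.map N.mkQ).comap N.mkQ := by rw [himage]
    _ = N ⊔ A := Submodule.comap_map_mkQ N A

theorem apply_mem_fixedSubmodule_iff {f : V →ₗ[k] W}
    (hequiv : ∀ (s : S) (v : V), f (ρ s v) = σ s (f v)) {v : V} :
    f v ∈ fixedSubmodule σ ↔ ∀ s : S, ρ s v - v ∈ LinearMap.ker f :=
  forall_congr' fun s => by rw [LinearMap.sub_mem_ker_iff, hequiv]

theorem map_fixedSubmodule_le {f : V →ₗ[k] W}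
    (hequiv : ∀ (s : S) (v : V), f (ρ s v) = σ s (f v)) :
    (fixedSubmodule ρ).map f ≤ fixedSubmodule σ := by
  rintro _ ⟨v, hv, rfl⟩ s
  rw [← hequiv, hv s]

theorem comap_fixedSubmodule_le_sup_ker {f : V →ₗ[k] W}
    (hequiv : ∀ (s : S) (v : V), f (ρ s v) = σ s (f v))
    (hnt : ¬ HasTrivialCompositionFactor
      (quotRep ρ (fixedSubmodule ρ) (fixedSubmodule_isSubrep ρ))) :
    (fixedSubmodule σ).comap f ≤ fixedSubmodule ρ ⊔ LinearMap.ker f :=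
  le_sup_of_not_hasTrivialCompositionFactor_quotRep hnt (LinearMap.ker_le_comap f)
    fun s _ hv => (apply_mem_fixedSubmodule_iff hequiv).1 hv s

end

theorem stmt_0_general {k S V W : Type*} [CommRing k] [Group S]
    [AddCommGroup V] [Module k V] [AddCommGroup W] [Module k W]
    (ρ : Representation k S V) (σ : Representation k S W) (f : V →ₗ[k] W)
    (hequiv : ∀ (s : S) (v : V), f (ρ s v) = σ s (f v))
    (hnt : ¬ HasTrivialCompositionFactor
      (quotRep ρ (fixedSubmodule ρ) (fixedSubmodule_isSubrep ρ))) :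
    (fixedSubmodule ρ).map f = LinearMap.range f ⊓ fixedSubmodule σ := by
  refine le_antisymm (le_inf LinearMap.map_le_range (map_fixedSubmodule_le hequiv)) ?_
  rw [← Submodule.map_comap_eq, LinearMap.map_le_map_iff]
  exact comap_fixedSubmodule_le_sup_ker hequiv hnt

/-- if `f : V → W` is a surjective `S`-equivariant `k`-linear map of
finite-dimensional representations and the quotient `S`-module `V/V^S` has no
trivial composition factor, then `f(V^S) = W^S`. -/
theorem stmt_0 {k S V W : Type*} [Field k] [Group S]
    [AddCommGroup V] [Module k V] [FiniteDimensional k V]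
    [AddCommGroup W] [Module k W] [FiniteDimensional k W]
    (ρ : Representation k S V) (σ : Representation k S W)
    (f : V →ₗ[k] W) (hsurj : Function.Surjective f)
    (hequiv : ∀ (s : S) (v : V), f (ρ s v) = σ s (f v))
    (hnt : ¬ HasTrivialCompositionFactor
      (quotRep ρ (fixedSubmodule ρ) (fixedSubmodule_isSubrep ρ))) :
    (fixedSubmodule ρ).map f = fixedSubmodule σ := by
  rw [stmt_0_general ρ σ f hequiv hnt, LinearMap.range_eq_top.2 hsurj, top_inf_eq]
end

section
/- Let k be a field, n ≥ 1, and let H be a subgroup of GL_n(k). Equip sl_n(k), the space of trace-zero n×n matrices, with the conjugation action g·X = gXg^{-1} of H. If sl_n(k) is a semisimple H-module, then the natural module k^n (with H acting by matrix multiplication) is a semisimple H-module. -/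
def IsSemisimpleRep {k S V : Type*} [CommRing k] [Group S] [AddCommGroup V] [Module k V]
    (ρ : Representation k S V) : Prop :=
  ∀ p : Submodule k V, IsSubrep ρ p → ∃ q : Submodule k V, IsSubrep ρ q ∧ IsCompl p q

variable (n : ℕ) (k : Type*) [Field k]

/-- The conjugation representation of `GL_n(k)` on the space of `n × n` matrices:
`g · X = g * X * g⁻¹`. -/
def glConjRep : Representation k (Matrix.GeneralLinearGroup (Fin n) k)
    (Matrix (Fin n) (Fin n) k) where
  toFun g :=
    { toFun := fun X => (g : Matrix (Fin n) (Fin n) k) * X *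
        ((g⁻¹ : Matrix.GeneralLinearGroup (Fin n) k) : Matrix (Fin n) (Fin n) k)
      map_add' := by intro X Y; simp [mul_add, add_mul]
      map_smul' := by intro c X; simp [mul_smul_comm, smul_mul_assoc] }
  map_one' := by
    refine LinearMap.ext fun X => ?_
    simp
  map_mul' g h := by
    refine LinearMap.ext fun X => ?_
    simp [Units.val_mul, mul_inv_rev, mul_assoc, Module.End.mul_apply]

/-- The conjugation representation of a subgroup `H` of `GL_n(k)` on `M_n(k)`. -/
def matConjRep (H : Subgroup (Matrix.GeneralLinearGroup (Fin n) k)) :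
    Representation k H (Matrix (Fin n) (Fin n) k) :=
  (glConjRep n k).comp H.subtype

/-- The natural representation of a subgroup `H` of `GL_n(k)` on `k^n`. -/
def naturalRep (H : Subgroup (Matrix.GeneralLinearGroup (Fin n) k)) :
    Representation k H (Fin n → k) where
  toFun h := Matrix.mulVecLin
    ((h : Matrix.GeneralLinearGroup (Fin n) k) : Matrix (Fin n) (Fin n) k)
  map_one' := by simp [Module.End.one_eq_id]
  map_mul' g h := by
    simp [Units.val_mul, Matrix.mulVecLin_mul, Module.End.mul_eq_comp]

/-- The line of scalar matrices `k · I_n` is stable under conjugation by `GL_n(k)`. -/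
theorem scalarLine_isSubrep_gl :
    IsSubrep (glConjRep n k)
      (Submodule.span k {(1 : Matrix (Fin n) (Fin n) k)}) := by
  intro s v hv
  rw [Submodule.mem_span_singleton] at hv ⊢
  obtain ⟨c, rfl⟩ := hv
  refine ⟨c, ?_⟩
  have hu : ((s : Matrix (Fin n) (Fin n) k)) *
      ((s⁻¹ : Matrix.GeneralLinearGroup (Fin n) k) : Matrix (Fin n) (Fin n) k) = 1 := by
    rw [← Units.val_mul, mul_inv_cancel, Units.val_one]
  show c • (1 : Matrix (Fin n) (Fin n) k) =
    (s : Matrix (Fin n) (Fin n) k) * (c • (1 : Matrix (Fin n) (Fin n) k)) *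
      ((s⁻¹ : Matrix.GeneralLinearGroup (Fin n) k) : Matrix (Fin n) (Fin n) k)
  rw [mul_smul_comm, smul_mul_assoc, mul_one, hu]

/-- The line of scalar matrices is stable under conjugation by any subgroup. -/
theorem scalarLine_isSubrep (H : Subgroup (Matrix.GeneralLinearGroup (Fin n) k)) :
    IsSubrep (matConjRep n k H)
      (Submodule.span k {(1 : Matrix (Fin n) (Fin n) k)}) :=
  fun s v hv => scalarLine_isSubrep_gl n k (s : Matrix.GeneralLinearGroup (Fin n) k) v hv

/-- Semisimplicity of a stable submodule `Wtop` of a representation: every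
`S`-submodule of `Wtop` has an `S`-stable direct complement inside `Wtop`. -/
def IsSemisimpleRepOn {k S V : Type*} [CommRing k] [Group S] [AddCommGroup V] [Module k V]
    (ρ : Representation k S V) (Wtop : Submodule k V) : Prop :=
  ∀ p : Submodule k V, p ≤ Wtop → IsSubrep ρ p →
    ∃ q : Submodule k V, q ≤ Wtop ∧ IsSubrep ρ q ∧ p ⊓ q = ⊥ ∧ p ⊔ q = Wtop

/-!
Let `W` be an `H`-stable subspace of the natural module `V`, and let `P` be the space of
endomorphisms of `V` that map `W` into itself. If `W ≠ 0`, then `P` contains an endomorphism of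
nonzero trace, so an `H`-stable complement of `P ∩ sl(V)` in `sl(V)` is also a complement of `P`
in `End V`. Hence the invariant functional `X ↦ tr (X|_W)` on `P` extends to an invariant
functional `φ` on `End V`. Under the trace form, `φ` corresponds to an endomorphism `b` commuting
with `H`, and testing `φ` on the rank-one elements of `P` shows that `b` is a projection onto `W`;
its kernel is the desired complement.
-/

open LinearMap (IsProj trace)

section CommRing

variable {R G V V' : Type*} [CommRing R] [Group G] [AddCommGroup V] [Module R V]
  [AddCommGroup V'] [Module R V'] {ρ : Representation R G V} {σ : Representation R G V'}

theorem IsSubrep.inf {p q : Submodule R V} (hp : IsSubrep ρ p) (hq : IsSubrep ρ q) :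
    IsSubrep ρ (p ⊓ q) :=
  fun g v hv => ⟨hp g v hv.1, hq g v hv.2⟩

theorem IsSubrep.mem_invtSubmodule {p : Submodule R V} (hp : IsSubrep ρ p) (g : G) :
    p ∈ Module.End.invtSubmodule (ρ g) :=
  hp g

theorem IsSubrep.compatibleMaps {p : Submodule R V} {q : Submodule R V'} (hp : IsSubrep ρ p)
    (hq : IsSubrep σ q) : IsSubrep (ρ.linHom σ) (p.compatibleMaps q) :=
  fun g _ hX v hv => hq g _ (hX (hp g⁻¹ v hv))

theorem isProj_projection {p q : Submodule R V} (hpq : IsCompl p q) :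
    IsProj p (p.projection q hpq) :=
  ⟨p.projection_apply_mem hpq, fun _ hv => p.projection_apply_of_mem_left hpq hv⟩

theorem IsSubrep.exists_isCompl_iff {p : Submodule R V} (hp : IsSubrep ρ p) :
    (∃ q, IsSubrep ρ q ∧ IsCompl p q) ↔
      ∃ e : Module.End R V, IsProj p e ∧ ∀ g, Commute e (ρ g) := by
  constructor
  · rintro ⟨q, hq, hpq⟩
    refine ⟨p.projection q hpq, isProj_projection hpq, fun g => ?_⟩
    rw [LinearMap.IsIdempotentElem.commute_iff (Submodule.isIdempotentElem_projection hpq),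
      Submodule.range_projection, Submodule.ker_projection]
    exact ⟨hp.mem_invtSubmodule g, hq.mem_invtSubmodule g⟩
  · rintro ⟨e, he, hcomm⟩
    exact ⟨LinearMap.ker e, fun g =>
      (LinearMap.IsIdempotentElem.commute_iff he.isIdempotentElem).1 (hcomm g) |>.2, he.isCompl⟩

theorem IsSubrep.exists_invariant_extension {p : Submodule R V} (hp : IsSubrep ρ p)
    (hpc : ∃ q, IsSubrep ρ q ∧ IsCompl p q) (ψ : V →ₗ[R] V')
    (hψ : ∀ g, ∀ v ∈ p, ψ (ρ g v) = ψ v) :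
    ∃ φ : V →ₗ[R] V', (∀ g v, φ (ρ g v) = φ v) ∧ ∀ v ∈ p, φ v = ψ v := by
  obtain ⟨e, he, hcomm⟩ := hp.exists_isCompl_iff.1 hpc
  refine ⟨ψ ∘ₗ e, fun g v => ?_, fun v hv => congrArg ψ (he.map_id v hv)⟩
  have heg : e (ρ g v) = ρ g (e v) := LinearMap.congr_fun (hcomm g) v
  rw [LinearMap.comp_apply, heg, hψ g _ (he.map_mem v), LinearMap.comp_apply]

theorem IsSemisimpleRepOn.exists_isCompl_of_codisjoint {N p : Submodule R V}
    (hss : IsSemisimpleRepOn ρ N) (hN : IsSubrep ρ N) (hp : IsSubrep ρ p)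
    (hpN : Codisjoint p N) : ∃ q, IsSubrep ρ q ∧ IsCompl p q := by
  obtain ⟨q, hqN, hq, hinf, hsup⟩ := hss (p ⊓ N) inf_le_right (hp.inf hN)
  refine ⟨q, hq, disjoint_iff.2 ?_, codisjoint_iff.2 ?_⟩
  · rw [← hinf, inf_assoc, inf_eq_right.2 hqN]
  · rw [← hpN.eq_top, ← hsup, ← sup_assoc, sup_inf_self]

theorem IsSemisimpleRepOn.of_comap {N : Submodule R V'} (e : V ≃ₗ[R] V')
    (he : ∀ g v, e (ρ g v) = σ g (e v))
    (hss : IsSemisimpleRepOn ρ (N.comap (e : V →ₗ[R] V'))) : IsSemisimpleRepOn σ N := by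
  intro p hpN hp
  obtain ⟨q, -, hq, hinf, hsup⟩ := hss (p.comap (e : V →ₗ[R] V')) (Submodule.comap_mono hpN)
    fun g v hv => by simpa [he] using hp g _ hv
  have map_comap (r : Submodule R V') : (r.comap (e : V →ₗ[R] V')).map (e : V →ₗ[R] V') = r :=
    Submodule.map_comap_eq_of_surjective e.surjective r
  have hpq : p ⊔ q.map (e : V →ₗ[R] V') = N := by
    rw [← map_comap p, ← Submodule.map_sup, hsup, map_comap]
  refine ⟨q.map (e : V →ₗ[R] V'), hpq ▸ le_sup_right, ?_, ?_, hpq⟩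
  · rintro g _ ⟨v, hv, rfl⟩
    exact ⟨ρ g v, hq g v hv, he g v⟩
  · rw [← map_comap p, ← Submodule.map_inf _ e.injective, hinf, Submodule.map_bot]

theorem linHom_self_apply_eq_mul (g : G) (X : Module.End R V) :
    ρ.linHom ρ g X = ρ g * X * ρ g⁻¹ :=
  rfl

theorem trace_mul_linHom (g : G) (X Y : Module.End R V) :
    trace R V (X * ρ.linHom ρ g Y) = trace R V (ρ.linHom ρ g⁻¹ X * Y) := by
  rw [linHom_self_apply_eq_mul, linHom_self_apply_eq_mul, inv_inv, ← mul_assoc,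
    LinearMap.trace_mul_comm]
  simp only [mul_assoc]

theorem trace_linHom (g : G) (X : Module.End R V) :
    trace R V (ρ.linHom ρ g X) = trace R V X := by
  rw [linHom_self_apply_eq_mul, LinearMap.trace_mul_cycle, ← map_mul, inv_mul_cancel, map_one,
    one_mul]

theorem isSubrep_ker_trace : IsSubrep (ρ.linHom ρ) (LinearMap.ker (trace R V)) :=
  fun g X hX => (trace_linHom g X).trans hX

theorem isProj_linHom {W : Submodule R V} (hW : IsSubrep ρ W) {e : Module.End R V}
    (he : IsProj W e) (g : G) : IsProj W (ρ.linHom ρ g e) where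
  map_mem v := hW g _ (he.map_mem _)
  map_id v hv := by
    simp [he.map_id _ (hW g⁻¹ v hv)]

-- Both sides are the trace of the restriction of `X` to `W`.
theorem trace_mul_eq_of_isProj {W : Submodule R V} {e e' X : Module.End R V} (he : IsProj W e)
    (he' : IsProj W e') (hX : X ∈ W.compatibleMaps W) :
    trace R V (e * X) = trace R V (e' * X) := by
  have he'e : e' * e = e := LinearMap.ext fun v => he'.map_id _ (he.map_mem v)
  have heXe' : e * (X * e') = X * e' := LinearMap.ext fun v => he.map_id _ (hX (he'.map_mem v))
  calc trace R V (e * X) = trace R V (e' * (e * X)) := by rw [← mul_assoc, he'e]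
    _ = trace R V (e * (X * e')) := by rw [LinearMap.trace_mul_comm, mul_assoc]
    _ = trace R V (e' * X) := by rw [heXe', LinearMap.trace_mul_comm]

theorem trace_mul_linHom_of_isProj {W : Submodule R V} (hW : IsSubrep ρ W)
    {e X : Module.End R V} (he : IsProj W e) (hX : X ∈ W.compatibleMaps W) (g : G) :
    trace R V (e * ρ.linHom ρ g X) = trace R V (e * X) := by
  rw [trace_mul_linHom]
  exact trace_mul_eq_of_isProj (isProj_linHom hW he g⁻¹) he hX

theorem trace_mul_smulRight [Module.Free R V] [Module.Finite R V] (X : Module.End R V)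
    (f : Module.Dual R V) (v : V) : trace R V (X * f.smulRight v) = f (X v) := by
  have hX : X * f.smulRight v = f.smulRight (X v) := by
    ext w
    simp
  rw [hX, LinearMap.trace_smulRight]

theorem exists_end_forall_dual_apply_eq [Module.IsReflexive R V] (φ : Module.End R V →ₗ[R] R) :
    ∃ b : Module.End R V, ∀ (f : Module.Dual R V) v, f (b v) = φ (f.smulRight v) :=
  ⟨(Module.evalEquiv R V).symm ∘ₗ LinearMap.flip (φ.compRight R ∘ₗ LinearMap.smulRightₗ), by simp⟩

theorem commute_of_forall_dual_apply_eq [Module.IsReflexive R V] {φ : Module.End R V →ₗ[R] R}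
    (hφ : ∀ g X, φ (ρ.linHom ρ g X) = φ X) {b : Module.End R V}
    (hb : ∀ (f : Module.Dual R V) v, f (b v) = φ (f.smulRight v)) (g : G) :
    Commute b (ρ g) := by
  have conj_smulRight (f : Module.Dual R V) (v : V) :
      ρ.linHom ρ g ((f ∘ₗ ρ g).smulRight v) = f.smulRight (ρ g v) := by
    ext x
    simp
  refine LinearMap.ext fun v => (Module.evalEquiv R V).injective (LinearMap.ext fun f => ?_)
  calc f (b (ρ g v)) = φ (ρ.linHom ρ g ((f ∘ₗ ρ g).smulRight v)) := by rw [hb, conj_smulRight]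
    _ = f (ρ g (b v)) := by rw [hφ, ← hb, LinearMap.comp_apply]

end CommRing

section Field

variable {K V : Type*} [Field K] [AddCommGroup V] [Module K V]

theorem isProj_of_forall_dual_apply_eq {W : Submodule K V} {b e : Module.End K V}
    (he : IsProj W e) (hb : ∀ (f : Module.Dual K V) (v : V),
      f.smulRight v ∈ W.compatibleMaps W → f (b v) = f (e v)) : IsProj W b where
  map_mem v := by
    refine (Subspace.forall_mem_dualAnnihilator_apply_eq_zero_iff W _).1 fun f hf => ?_
    rw [Submodule.mem_dualAnnihilator] at hf
    rw [hb f v fun w hw => by simp [hf w hw], hf _ (he.map_mem v)]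
  map_id w hw := by
    refine sub_eq_zero.1 ((Module.forall_dual_apply_eq_zero_iff K _).1 fun f => ?_)
    rw [map_sub, hb f w fun v _ => W.smul_mem (f v) hw, he.map_id w hw, sub_self]

theorem codisjoint_compatibleMaps_ker_trace [FiniteDimensional K V] {W : Submodule K V}
    (hW : W ≠ ⊥) : Codisjoint (W.compatibleMaps W) (LinearMap.ker (trace K V)) := by
  obtain ⟨w, hw, hw0⟩ := W.exists_mem_ne_zero_of_ne_bot hW
  obtain ⟨f, hf⟩ := Module.Projective.exists_dual_eq_one K hw0
  have htrace : trace K V (f.smulRight w) = 1 := by rw [LinearMap.trace_smulRight, hf]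
  have hker : IsCoatom (LinearMap.ker (trace K V)) :=
    LinearMap.isCoatom_ker_of_surjective (LinearMap.surjective fun h => by simp [h] at htrace)
  refine (hker.not_le_iff_codisjoint.1 fun hle => ?_).symm
  have hmem : f.smulRight w ∈ W.compatibleMaps W := fun v _ => W.smul_mem (f v) hw
  exact one_ne_zero (htrace.symm.trans (hle hmem))

end Field

theorem stmt_4_general {K G V : Type*} [Field K] [Group G] [AddCommGroup V] [Module K V]
    [FiniteDimensional K V] (ρ : Representation K G V)
    (hss : IsSemisimpleRepOn (ρ.linHom ρ) (LinearMap.ker (trace K V))) : IsSemisimpleRep ρ := by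
  intro W hW
  rcases eq_or_ne W ⊥ with rfl | hne
  · exact ⟨⊤, fun _ _ _ => trivial, isCompl_bot_top⟩
  have hP : IsSubrep (ρ.linHom ρ) (W.compatibleMaps W) := hW.compatibleMaps hW
  obtain ⟨q, hWq⟩ := W.exists_isCompl
  have he := isProj_projection hWq
  obtain ⟨φ, hφ, hφ_eq⟩ := hP.exists_invariant_extension
    (hss.exists_isCompl_of_codisjoint isSubrep_ker_trace hP
      (codisjoint_compatibleMaps_ker_trace hne))
    (trace K V ∘ₗ LinearMap.mulLeft K (W.projection q hWq))
    fun g X hX => trace_mul_linHom_of_isProj hW he hX g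
  obtain ⟨b, hb⟩ := exists_end_forall_dual_apply_eq φ
  have hb_proj : IsProj W b := isProj_of_forall_dual_apply_eq he fun f v hfv =>
    (hb f v).trans ((hφ_eq _ hfv).trans (trace_mul_smulRight _ f v))
  exact hW.exists_isCompl_iff.2 ⟨b, hb_proj, commute_of_forall_dual_apply_eq hφ hb⟩

section Matrix

variable {n k}

theorem toLin'_matConjRep_apply (H : Subgroup (Matrix.GeneralLinearGroup (Fin n) k)) (h : H)
    (X : Matrix (Fin n) (Fin n) k) :
    Matrix.toLin' (matConjRep n k H h X) =
      (naturalRep n k H).linHom (naturalRep n k H) h (Matrix.toLin' X) := by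
  change Matrix.toLin' (_ * X * _) = _
  rw [Matrix.toLin'_mul, Matrix.toLin'_mul, LinearMap.comp_assoc]
  rfl

theorem comap_toLin'_ker_trace :
    (LinearMap.ker (trace k (Fin n → k))).comap
        (Matrix.toLin' : Matrix (Fin n) (Fin n) k ≃ₗ[k] _).toLinearMap =
      LinearMap.ker (Matrix.traceLinearMap (Fin n) k k) := by
  ext X
  simp

end Matrix

/-- if the conjugation `H`-module `sl_n(k)` of trace-zero matrices is
semisimple, then the natural `H`-module `k^n` is semisimple. -/
theorem stmt_4 {k : Type*} [Field k] {n : ℕ} (hn : 1 ≤ n)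
    (H : Subgroup (Matrix.GeneralLinearGroup (Fin n) k))
    (hss : IsSemisimpleRepOn (matConjRep n k H)
      (LinearMap.ker (Matrix.traceLinearMap (Fin n) k k))) :
    IsSemisimpleRep (naturalRep n k H) := by
  refine stmt_4_general _ (.of_comap Matrix.toLin' (toLin'_matConjRep_apply H) ?_)
  rwa [comap_toLin'_ker_trace]
end

section
/- Let k be a field, n ≥ 1, and let H be a subgroup of GL_n(k). Then the conjugation H-module sl_n(k) of trace-zero n×n matrices is semisimple if and only if the H-module pgl_n(k) = M_n(k)/(k·I_n), with the action induced by conjugation, is semisimple. -/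
variable (n : ℕ) (k : Type*) [Field k]

/-!
The trace form `(X, Y) ↦ tr (X Y)` on `M_n(k)` is nondegenerate and conjugation invariant, so
`p ↦ pᗮ` is an anti-automorphism of the lattice of `H`-stable subspaces of `M_n(k)`. Since `sl_n` is
the orthogonal of `k · I_n`, it exchanges the interval `[k · I_n, M_n(k)]`, which is the lattice of
submodules of `pgl_n`, with the interval `[0, sl_n]`. Semisimplicity says that the lattice of
submodules is complemented, a property which is invariant under order reversal.
-/

section OrderDuality

theorem complementedLattice_orderDual_iff {α : Type*} [Lattice α] [BoundedOrder α] :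
    ComplementedLattice αᵒᵈ ↔ ComplementedLattice α :=
  ⟨fun _ ↦ (OrderIso.dualDual α).symm.complementedLattice, fun _ ↦ inferInstance⟩

/-- The restriction of an order anti-isomorphism `e` to the elements above `a`, which it maps onto
the elements below `e a`. -/
def orderIsoIciDualIic {α β : Type*} [Preorder α] [Preorder β] (e : α ≃o βᵒᵈ) (a : α) :
    Set.Ici a ≃o (Set.Iic (OrderDual.ofDual (e a)))ᵒᵈ where
  toFun b := OrderDual.toDual ⟨OrderDual.ofDual (e b), e.monotone b.2⟩
  invFun c := ⟨e.symm (OrderDual.toDual (OrderDual.ofDual c).1),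
    e.le_symm_apply.2 (OrderDual.ofDual c).2⟩
  left_inv b := Subtype.ext (e.symm_apply_apply b)
  right_inv c := Subtype.ext (e.apply_symm_apply (OrderDual.toDual (OrderDual.ofDual c).1))
  map_rel_iff' := e.le_iff_le

theorem complementedLattice_Iic_iff_Ici {α β : Type*} [Lattice α] [OrderTop α] [Lattice β]
    [OrderBot β] (e : α ≃o βᵒᵈ) (a : α) :
    ComplementedLattice (Set.Iic (OrderDual.ofDual (e a))) ↔ ComplementedLattice (Set.Ici a) :=
  complementedLattice_orderDual_iff.symm.trans (orderIsoIciDualIic e a).complementedLattice_iff.symm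

end OrderDuality

section StableSubmodules

variable {K G V : Type*} [CommRing K] [Group G] [AddCommGroup V] [Module K V]
  {ρ : Representation K G V}

/-- A stable submodule, bundled as an element of the lattice of subrepresentations. -/
def IsSubrep.toSubrepresentation {p : Submodule K V} (hp : IsSubrep ρ p) : Subrepresentation ρ :=
  ⟨p, hp⟩

theorem isCompl_subrepresentation_iff {p q : Subrepresentation ρ} :
    IsCompl p q ↔ IsCompl p.toSubmodule q.toSubmodule := by
  simp only [isCompl_iff, disjoint_iff, codisjoint_iff, Subrepresentation.ext_iff,
    Subrepresentation.toSubmodule_inf, Subrepresentation.toSubmodule_sup]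
  rfl

theorem isSemisimpleRep_iff_complementedLattice :
    IsSemisimpleRep ρ ↔ ComplementedLattice (Subrepresentation ρ) := by
  rw [complementedLattice_iff]
  constructor
  · intro h p
    obtain ⟨q, hq, hpq⟩ := h p.toSubmodule p.apply_mem_toSubmodule
    exact ⟨hq.toSubrepresentation, isCompl_subrepresentation_iff.2 hpq⟩
  · intro h p hp
    obtain ⟨q, hpq⟩ := h hp.toSubrepresentation
    exact ⟨q.toSubmodule, q.apply_mem_toSubmodule, isCompl_subrepresentation_iff.1 hpq⟩

theorem IsSubrep.isSemisimpleRepOn_iff_complementedLattice {W : Submodule K V}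
    (hW : IsSubrep ρ W) :
    IsSemisimpleRepOn ρ W ↔ ComplementedLattice (Set.Iic hW.toSubrepresentation) := by
  rw [Set.Iic.complementedLattice_iff]
  constructor
  · intro h p hpW
    obtain ⟨q, hqW, hq, hinf, hsup⟩ := h p.toSubmodule hpW p.apply_mem_toSubmodule
    exact ⟨hq.toSubrepresentation, hqW, Subrepresentation.ext hinf, Subrepresentation.ext hsup⟩
  · intro h p hpW hp
    obtain ⟨q, hqW, hinf, hsup⟩ := h hp.toSubrepresentation hpW
    exact ⟨q.toSubmodule, hqW, q.apply_mem_toSubmodule,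
      congrArg Subrepresentation.toSubmodule hinf, congrArg Subrepresentation.toSubmodule hsup⟩

/-- The correspondence theorem: subrepresentations of the quotient by `N` are the
subrepresentations containing `N`. -/
def quotRepSubrepresentationOrderIso {N : Submodule K V} (hN : IsSubrep ρ N) :
    Subrepresentation (quotRep ρ N hN) ≃o Set.Ici hN.toSubrepresentation where
  toFun p := ⟨⟨p.toSubmodule.comap N.mkQ, fun g _ hv ↦ p.apply_mem_toSubmodule g hv⟩,
    N.le_comap_mkQ p.toSubmodule⟩
  invFun p := ⟨p.1.toSubmodule.map N.mkQ, by
    rintro g _ ⟨v, hv, rfl⟩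
    exact ⟨ρ g v, p.1.apply_mem_toSubmodule g hv, rfl⟩⟩
  left_inv p := Subrepresentation.toSubmodule_injective <|
    (Submodule.comapMkQRelIso N).symm_apply_apply p.toSubmodule
  right_inv p := Subtype.ext <| Subrepresentation.toSubmodule_injective <|
    congrArg Subtype.val <|
      (Submodule.comapMkQRelIso N).apply_symm_apply ⟨p.1.toSubmodule, p.2⟩
  map_rel_iff' := (Submodule.comapMkQRelIso N).le_iff_le

theorem isSemisimpleRep_quotRep_iff_complementedLattice {N : Submodule K V} (hN : IsSubrep ρ N) :
    IsSemisimpleRep (quotRep ρ N hN) ↔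
      ComplementedLattice (Set.Ici hN.toSubrepresentation) :=
  isSemisimpleRep_iff_complementedLattice.trans
    (quotRepSubrepresentationOrderIso hN).complementedLattice_iff

/-- The bilinear form `B` is invariant under the action of the group through `ρ`. -/
def IsInvariantForm (ρ : Representation K G V) (B : LinearMap.BilinForm K V) : Prop :=
  ∀ g v w, B (ρ g v) (ρ g w) = B v w

theorem IsInvariantForm.isSubrep_orthogonal {B : LinearMap.BilinForm K V}
    (hρ : IsInvariantForm ρ B) {p : Submodule K V} (hp : IsSubrep ρ p) :
    IsSubrep ρ (B.orthogonal p) := by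
  intro g v hv x hx
  have hBx : B (ρ g⁻¹ x) v = 0 := hv _ (hp g⁻¹ x hx)
  change B x (ρ g v) = 0
  rwa [← hρ g, ρ.self_inv_apply] at hBx

end StableSubmodules

section InvariantForm

variable {K G V : Type*} [Field K] [Group G] [AddCommGroup V] [Module K V] [FiniteDimensional K V]
  {ρ : Representation K G V} {B : LinearMap.BilinForm K V}

/-- Orthogonality with respect to an invariant form, as an anti-automorphism of the lattice of
subrepresentations. -/
def IsInvariantForm.orthogonalOrderIso (hρ : IsInvariantForm ρ B) (hB : B.Nondegenerate)
    (hrefl : B.IsRefl) : Subrepresentation ρ ≃o (Subrepresentation ρ)ᵒᵈ :=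
  Equiv.toOrderIso
    { toFun p := OrderDual.toDual
        (hρ.isSubrep_orthogonal p.apply_mem_toSubmodule).toSubrepresentation
      invFun p :=
        (hρ.isSubrep_orthogonal (OrderDual.ofDual p).apply_mem_toSubmodule).toSubrepresentation
      left_inv p := Subrepresentation.toSubmodule_injective <|
        LinearMap.BilinForm.orthogonal_orthogonal hB hrefl p.toSubmodule
      right_inv p := Subrepresentation.toSubmodule_injective <|
        LinearMap.BilinForm.orthogonal_orthogonal hB hrefl (OrderDual.ofDual p).toSubmodule }
    (fun _ _ h ↦ LinearMap.BilinForm.orthogonal_le h)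
    (fun _ _ h ↦ LinearMap.BilinForm.orthogonal_le h)

theorem IsInvariantForm.isSemisimpleRepOn_orthogonal_iff_quotRep (hρ : IsInvariantForm ρ B)
    (hB : B.Nondegenerate) (hrefl : B.IsRefl) {N : Submodule K V} (hN : IsSubrep ρ N) :
    IsSemisimpleRepOn ρ (B.orthogonal N) ↔ IsSemisimpleRep (quotRep ρ N hN) := by
  rw [(hρ.isSubrep_orthogonal hN).isSemisimpleRepOn_iff_complementedLattice,
    isSemisimpleRep_quotRep_iff_complementedLattice]
  exact complementedLattice_Iic_iff_Ici (hρ.orthogonalOrderIso hB hrefl) hN.toSubrepresentation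

end InvariantForm

section TraceForm

variable (m R : Type*) [Fintype m] [CommRing R]

/-- The trace form `(X, Y) ↦ tr (X * Y)` on square matrices. -/
def matrixTraceForm : LinearMap.BilinForm R (Matrix m m R) :=
  (LinearMap.mul R (Matrix m m R)).compr₂ (Matrix.traceLinearMap m R R)

variable {m R}

theorem matrixTraceForm_apply (X Y : Matrix m m R) :
    matrixTraceForm m R X Y = (X * Y).trace :=
  rfl

theorem matrixTraceForm_isSymm : (matrixTraceForm m R).IsSymm :=
  ⟨Matrix.trace_mul_comm⟩

theorem matrixTraceForm_nondegenerate : (matrixTraceForm m R).Nondegenerate := by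
  constructor
  · intro X hX
    exact Matrix.ext_iff_trace_mul_right.2 fun Y ↦ by simpa [matrixTraceForm_apply] using hX Y
  · intro Y hY
    exact Matrix.ext_iff_trace_mul_left.2 fun X ↦ by simpa [matrixTraceForm_apply] using hY X

variable [DecidableEq m]

theorem orthogonal_matrixTraceForm_span_one :
    (matrixTraceForm m R).orthogonal (Submodule.span R {1}) =
      LinearMap.ker (Matrix.traceLinearMap m R R) := by
  ext X
  rw [LinearMap.BilinForm.mem_orthogonal_iff, LinearMap.mem_ker, Matrix.traceLinearMap_apply]
  constructor
  · intro h
    simpa [matrixTraceForm_apply] using h 1 (Submodule.mem_span_singleton_self 1)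
  · intro hX Y hY
    obtain ⟨c, rfl⟩ := Submodule.mem_span_singleton.1 hY
    simp [matrixTraceForm_apply, hX]

theorem matrixTraceForm_conj (g : (Matrix m m R)ˣ) (X Y : Matrix m m R) :
    matrixTraceForm m R (g.val * X * g⁻¹.val) (g.val * Y * g⁻¹.val) =
      matrixTraceForm m R X Y := by
  calc (g.val * X * g⁻¹.val * (g.val * Y * g⁻¹.val)).trace
      = (g.val * (X * Y) * g⁻¹.val).trace := by simp only [mul_assoc, Units.inv_mul_cancel_left]
    _ = (X * Y).trace := Matrix.trace_units_conj g (X * Y)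

end TraceForm

theorem isInvariantForm_matConjRep {n : ℕ} {k : Type*} [Field k]
    (H : Subgroup (Matrix.GeneralLinearGroup (Fin n) k)) :
    IsInvariantForm (matConjRep n k H) (matrixTraceForm (Fin n) k) :=
  fun h ↦ matrixTraceForm_conj (h : Matrix.GeneralLinearGroup (Fin n) k)

/-- the conjugation `H`-module `sl_n(k)` is semisimple if and only if
the `H`-module `pgl_n(k) = M_n(k)/(k·I_n)` is semisimple. -/
theorem stmt_6 {k : Type*} [Field k] {n : ℕ} (hn : 1 ≤ n)
    (H : Subgroup (Matrix.GeneralLinearGroup (Fin n) k)) :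
    IsSemisimpleRepOn (matConjRep n k H)
      (LinearMap.ker (Matrix.traceLinearMap (Fin n) k k)) ↔
    IsSemisimpleRep (quotRep (matConjRep n k H)
      (Submodule.span k {(1 : Matrix (Fin n) (Fin n) k)})
      (scalarLine_isSubrep n k H)) := by
  rw [← orthogonal_matrixTraceForm_span_one]
  exact (isInvariantForm_matConjRep H).isSemisimpleRepOn_orthogonal_iff_quotRep
    matrixTraceForm_nondegenerate matrixTraceForm_isSymm.isRefl (scalarLine_isSubrep n k H)
end

section
/- Let p be a prime, k an algebraically closed field of characteristic p, and n = p². Then pgl_n(k) = M_n(k)/(k·I_n), equipped with the GL_n(k)-action induced by conjugation, is not a semisimple GL_n(k)-module. -/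
variable (n : ℕ) (k : Type*) [Field k]

/-!
When `n = 0` in `k`, the trace vanishes on scalar matrices, so it descends to a nonzero invariant
functional on `pgl_n(k)`. If `pgl_n(k)` were semisimple, a stable complement of the kernel of this
functional would contain a fixed vector of nonzero trace, that is, a matrix `X` of nonzero trace
such that `g X g⁻¹ - X` is scalar for all `g`. Take for `g` a transvection: some diagonal entry of
`g X g⁻¹` is the same as that of `X`, as `n ≥ 3`, so the scalar is `0`. Hence `X` commutes with
every transvection, so it is scalar, and its trace is `0` after all.
-/

section Representation

variable {R S V W : Type*} [CommRing R] [Group S] [AddCommGroup V] [Module R V]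
  [AddCommGroup W] [Module R W] {ρ : Representation R S V} {f : V →ₗ[R] W}

theorem isSubrep_ker (hf : ∀ s v, f (ρ s v) = f v) : IsSubrep ρ (LinearMap.ker f) := by
  intro s v hv
  rwa [LinearMap.mem_ker, hf]

theorem mk_mem_invariants_quotRep_iff {N : Submodule R V} {hN : IsSubrep ρ N} {v : V} :
    N.mkQ v ∈ (quotRep ρ N hN).invariants ↔ ∀ s, ρ s v - v ∈ N :=
  forall_congr' fun _ => Submodule.Quotient.eq N

theorem IsSemisimpleRep.exists_mem_invariants_apply_eq (hρ : IsSemisimpleRep ρ)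
    (hf : ∀ s v, f (ρ s v) = f v) (v : V) : ∃ w ∈ ρ.invariants, f w = f v := by
  obtain ⟨q, hq, hcompl⟩ := hρ (LinearMap.ker f) (isSubrep_ker hf)
  obtain ⟨u, w, hu, hw, rfl⟩ :=
    Submodule.codisjoint_iff_exists_add_eq.mp hcompl.codisjoint v
  refine ⟨w, fun s => ?_, by rw [map_add, LinearMap.mem_ker.mp hu, zero_add]⟩
  have hker : ρ s w - w ∈ LinearMap.ker f := by rw [LinearMap.mem_ker, map_sub, hf, sub_self]
  have hmem : ρ s w - w ∈ q := q.sub_mem (hq s w hw) hw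
  exact sub_eq_zero.mp (Submodule.disjoint_def.mp hcompl.disjoint _ hker hmem)

theorem exists_forall_sub_mem_of_isSemisimpleRep_quotRep {N : Submodule R V} {hN : IsSubrep ρ N}
    (hss : IsSemisimpleRep (quotRep ρ N hN)) (hf : ∀ s v, f (ρ s v) = f v)
    (hfN : N ≤ LinearMap.ker f) (v : V) : ∃ w, (∀ s, ρ s w - w ∈ N) ∧ f w = f v := by
  have hlift : ∀ s x, N.liftQ f hfN (quotRep ρ N hN s x) = N.liftQ f hfN x := by
    intro s x
    obtain ⟨u, rfl⟩ := N.mkQ_surjective x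
    exact hf s u
  obtain ⟨x, hx, hfx⟩ := hss.exists_mem_invariants_apply_eq hlift (N.mkQ v)
  obtain ⟨w, rfl⟩ := N.mkQ_surjective x
  exact ⟨w, mk_mem_invariants_quotRep_iff.mp hx, hfx⟩

end Representation

section Transvection

open Matrix

variable {m R : Type*} [Fintype m] [DecidableEq m] [CommRing R] {X : Matrix m m R}

theorem commute_transvection_of_conj_sub_mem_span_one (hm : 3 ≤ Fintype.card m)
    (t : TransvectionStruct m R)
    (ht : t.toMatrix * X * t.inv.toMatrix - X ∈ Submodule.span R {(1 : Matrix m m R)}) :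
    Commute t.toMatrix X := by
  obtain ⟨c, hc⟩ := Submodule.mem_span_singleton.mp ht
  obtain ⟨l, hli, hlj⟩ :=
    ENat.exists_ne_ne_of_three_le (by simpa using mod_cast hm) t.i t.j
  have hdiag : (t.toMatrix * X * t.inv.toMatrix) l l = X l l :=
    (mul_transvection_apply_of_ne _ _ _ _ hlj _ _).trans
      (transvection_mul_apply_of_ne _ _ _ _ hli _ _)
  have hc_zero : c = 0 := by
    simpa [hdiag] using congrFun₂ hc l l
  have hconj : t.toMatrix * X * t.inv.toMatrix = X := by
    rw [← sub_eq_zero, ← hc, hc_zero, zero_smul]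
  calc t.toMatrix * X = t.toMatrix * X * t.inv.toMatrix * t.toMatrix := by
        rw [mul_assoc _ t.inv.toMatrix, t.inv_mul, mul_one]
    _ = X * t.toMatrix := by rw [hconj]

theorem mem_range_scalar_of_conj_sub_mem_span_one (hm : 3 ≤ Fintype.card m)
    (hX : ∀ g : GL m R, g.val * X * g⁻¹.val - X ∈ Submodule.span R {(1 : Matrix m m R)}) :
    X ∈ Set.range (scalar m) :=
  mem_range_scalar_of_commute_transvectionStruct fun t =>
    commute_transvection_of_conj_sub_mem_span_one hm t
      (hX ⟨t.toMatrix, t.inv.toMatrix, t.mul_inv, t.inv_mul⟩)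

theorem span_one_le_ker_traceLinearMap (hm : (Fintype.card m : R) = 0) :
    Submodule.span R {(1 : Matrix m m R)} ≤ LinearMap.ker (traceLinearMap m R R) := by
  rw [Submodule.span_singleton_le_iff_mem, LinearMap.mem_ker, traceLinearMap_apply, trace_one, hm]

end Transvection

theorem stmt_8_general {k : Type*} [Field k] {n : ℕ} (hn : 3 ≤ n) (hnk : (n : k) = 0) :
    ¬ IsSemisimpleRep (quotRep (glConjRep n k)
      (Submodule.span k {(1 : Matrix (Fin n) (Fin n) k)}) (scalarLine_isSubrep_gl n k)) := by
  intro hss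
  let i : Fin n := ⟨0, by lia⟩
  obtain ⟨X, hX, htrace⟩ := exists_forall_sub_mem_of_isSemisimpleRep_quotRep hss
    Matrix.trace_units_conj (span_one_le_ker_traceLinearMap (by simpa)) (Matrix.single i i 1)
  obtain ⟨c, rfl⟩ := mem_range_scalar_of_conj_sub_mem_span_one (by simpa) hX
  have htrace_one : (Matrix.scalar (Fin n) c).trace = 1 :=
    htrace.trans (Matrix.trace_single_eq_same i 1)
  have htrace_zero : (Matrix.scalar (Fin n) c).trace = 0 := by simp [hnk]
  exact zero_ne_one (htrace_zero.symm.trans htrace_one)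

/-- for `p` prime, `k` algebraically closed of characteristic `p` and
`n = p²`, the `GL_n(k)`-module `pgl_n(k) = M_n(k)/(k·I_n)` (with the action induced
by conjugation) is not semisimple. -/
theorem stmt_8 {k : Type*} [Field k] [IsAlgClosed k] (p : ℕ) (hp : p.Prime) [CharP k p] :
    ¬ IsSemisimpleRep (quotRep (glConjRep (p ^ 2) k)
      (Submodule.span k {(1 : Matrix (Fin (p ^ 2)) (Fin (p ^ 2)) k)})
      (scalarLine_isSubrep_gl (p ^ 2) k)) := by
  have hn : 3 ≤ p ^ 2 := by nlinarith only [hp.two_le]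
  exact stmt_8_general hn (by simp)
end

section
/- Let k be an algebraically closed field, n ≥ 1, and let H be a subgroup of GL_n(k). Equip M_n(k), the space of n×n matrices, with the conjugation action g·X = gXg^{-1} of H. If M_n(k) is a semisimple H-module, then the natural module k^n (with H acting by matrix multiplication) is a semisimple H-module. -/
variable (n : ℕ) (k : Type*) [Field k]

/-!
Let `W` be a subrepresentation of `V`. The projections of `V` onto `W` form a `G`-stable coset of
the subrepresentation `Hom(V/W, W)` of `End(V)`. If that subrepresentation has a stable complement,
then the component in this complement of any projection onto `W` is again a projection onto `W`, and
it is fixed by `G`. Its kernel is a stable complement of `W`.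
-/

section SemisimpleEndomorphisms

open LinearMap Representation

variable {R G V W : Type*} [CommRing R] [Group G] [AddCommGroup V] [Module R V]
  [AddCommGroup W] [Module R W] {ρ : Representation R G V} {σ : Representation R G W}

theorem isSubrep_bot (ρ : Representation R G V) : IsSubrep ρ ⊥ := by
  rintro g _ rfl
  exact map_zero (ρ g)

theorem IsSubrep.comap {q : Submodule R W} (hq : IsSubrep σ q) {f : V →ₗ[R] W}
    (hf : IsIntertwiningMap ρ σ f) : IsSubrep ρ (q.comap f) := by
  intro g v hv
  rw [Submodule.mem_comap, hf.isIntertwining]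
  exact hq g _ hv

theorem isSubrep_ker_s12 {f : V →ₗ[R] W} (hf : IsIntertwiningMap ρ σ f) : IsSubrep ρ (ker f) :=
  (isSubrep_bot σ).comap hf

theorem IsSemisimpleRep.of_equiv (hρ : IsSemisimpleRep ρ) (φ : ρ.Equiv σ) :
    IsSemisimpleRep σ := by
  intro p hp
  obtain ⟨q, hq, hpq⟩ := hρ _ (hp.comap ⟨φ.isIntertwining⟩)
  refine ⟨_, hq.comap ⟨φ.symm.isIntertwining⟩, ?_⟩
  let e := Submodule.orderIsoMapComap φ.toLinearEquiv
  have himage : IsCompl (e (e.symm p)) (e q) := e.isCompl hpq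
  rwa [e.apply_symm_apply, Submodule.orderIsoMapComap_apply'] at himage

theorem IsSubrep.exists_mem_invariants_sub_mem {p q : Submodule R V} (hp : IsSubrep ρ p)
    (hq : IsSubrep ρ q) (hpq : IsCompl p q) {x : V} (hx : ∀ g, ρ g x - x ∈ p) :
    ∃ y ∈ ρ.invariants, x - y ∈ p := by
  obtain ⟨a, ha, b, hb, rfl⟩ :=
    Submodule.mem_sup.mp (hpq.sup_eq_top ▸ Submodule.mem_top : x ∈ p ⊔ q)
  refine ⟨b, fun g => sub_eq_zero.mp ?_, by simpa using ha⟩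
  have hmem_q : ρ g b - b ∈ q := q.sub_mem (hq g b hb) hb
  have hmem_p : ρ g b - b ∈ p := by
    have hsplit : ρ g b - b = (ρ g (a + b) - (a + b)) - (ρ g a - a) := by rw [map_add]; abel
    exact hsplit ▸ p.sub_mem (hx g) (p.sub_mem (hp g a ha) ha)
  exact Submodule.disjoint_def.mp hpq.disjoint _ hmem_p hmem_q

/-- The linear maps `V → W` that vanish on `p` and take values in `q`: the copy of `Hom(V/p, q)`
inside `Hom(V, W)`. For `p = q` it acts by translation on the set of projections onto `p`. -/
def homQuotientInto (p : Submodule R V) (q : Submodule R W) : Submodule R (V →ₗ[R] W) :=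
  Submodule.compatibleMaps ⊤ q ⊓ Submodule.compatibleMaps p ⊥

theorem mem_homQuotientInto {p : Submodule R V} {q : Submodule R W} {f : V →ₗ[R] W} :
    f ∈ homQuotientInto p q ↔ (∀ v, f v ∈ q) ∧ ∀ v ∈ p, f v = 0 :=
  and_congr_left' ⟨fun h _ => h Submodule.mem_top, fun h _ _ => h _⟩

theorem isSubrep_homQuotientInto {p : Submodule R V} {q : Submodule R W} (hp : IsSubrep ρ p)
    (hq : IsSubrep σ q) : IsSubrep (linHom ρ σ) (homQuotientInto p q) := by
  intro g f hf
  rw [mem_homQuotientInto] at hf ⊢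
  refine ⟨fun _ => hq g _ (hf.1 _), fun v hv => ?_⟩
  simp [hf.2 _ (hp g⁻¹ v hv)]

theorem isProj_iff_sub_mem_homQuotientInto {p : Submodule R V} {f f' : V →ₗ[R] V}
    (hf : IsProj p f) : IsProj p f' ↔ f - f' ∈ homQuotientInto p p := by
  rw [mem_homQuotientInto]
  constructor
  · intro hf'
    refine ⟨fun v => p.sub_mem (hf.map_mem v) (hf'.map_mem v), fun v hv => ?_⟩
    rw [LinearMap.sub_apply, hf.map_id v hv, hf'.map_id v hv, sub_self]
  · rintro ⟨hmem, hzero⟩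
    refine ⟨fun v => (p.sub_mem_iff_right (hf.map_mem v)).mp (hmem v), fun v hv => ?_⟩
    rw [← sub_eq_zero.mp (hzero v hv), hf.map_id v hv]

theorem IsSubrep.isProj_linHom {p : Submodule R V} (hp : IsSubrep ρ p) {f : V →ₗ[R] V}
    (hf : IsProj p f) (g : G) : IsProj p (linHom ρ ρ g f) where
  map_mem v := hp g _ (hf.map_mem _)
  map_id v hv := by simp [hf.map_id _ (hp g⁻¹ v hv)]

theorem exists_isProj [IsSemisimpleModule R V] (p : Submodule R V) :
    ∃ f : V →ₗ[R] V, IsProj p f := by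
  obtain ⟨q, hpq⟩ := exists_isCompl p
  exact ⟨p.projection q hpq, Submodule.projection_apply_mem hpq,
    fun _ => Submodule.projection_apply_of_mem_left hpq⟩

theorem IsSubrep.exists_isIntertwiningMap_isProj [IsSemisimpleModule R V]
    (hss : IsSemisimpleRep (linHom ρ ρ)) {p : Submodule R V} (hp : IsSubrep ρ p) :
    ∃ f : V →ₗ[R] V, IsIntertwiningMap ρ ρ f ∧ IsProj p f := by
  obtain ⟨f, hf⟩ := exists_isProj p
  have hhom : IsSubrep (linHom ρ ρ) (homQuotientInto p p) := isSubrep_homQuotientInto hp hp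
  obtain ⟨q, hq, hcompl⟩ := hss _ hhom
  have hcoset (g : G) : linHom ρ ρ g f - f ∈ homQuotientInto p p :=
    (isProj_iff_sub_mem_homQuotientInto (hp.isProj_linHom hf g)).mp hf
  obtain ⟨f', hinv, hsub⟩ := hhom.exists_mem_invariants_sub_mem hq hcompl hcoset
  exact ⟨f', (mem_linHom_invariants_iff_isIntertwining f').mp hinv,
    (isProj_iff_sub_mem_homQuotientInto hf).mpr hsub⟩

theorem stmt_12_general [IsSemisimpleModule R V] (hss : IsSemisimpleRep (linHom ρ ρ)) :
    IsSemisimpleRep ρ := by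
  intro p hp
  obtain ⟨f, hequiv, hproj⟩ := hp.exists_isIntertwiningMap_isProj hss
  exact ⟨ker f, isSubrep_ker_s12 hequiv, hproj.isCompl⟩

end SemisimpleEndomorphisms

/-- The identification of matrices with endomorphisms of `k^n`, as an isomorphism from the
conjugation representation on `M_n(k)` to the representation of `H` on `End(k^n)` induced by the
natural one. -/
def matConjRepEquivLinHom {k : Type*} [Field k] {n : ℕ}
    (H : Subgroup (Matrix.GeneralLinearGroup (Fin n) k)) :
    (matConjRep n k H).Equiv
      (Representation.linHom (naturalRep n k H) (naturalRep n k H)) :=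
  .mk Matrix.toLin' fun h => by
    ext1 X
    change Matrix.toLin' ((h : Matrix.GeneralLinearGroup (Fin n) k).val * X *
      (h⁻¹ : Matrix.GeneralLinearGroup (Fin n) k).val) = _
    rw [Matrix.toLin'_mul, Matrix.toLin'_mul, LinearMap.comp_assoc]
    rfl

/-- over an algebraically closed field, if the conjugation `H`-module
`M_n(k)` is semisimple, then the natural `H`-module `k^n` is semisimple. -/
theorem stmt_12 {k : Type*} [Field k] [IsAlgClosed k] {n : ℕ} (hn : 1 ≤ n)
    (H : Subgroup (Matrix.GeneralLinearGroup (Fin n) k))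
    (hss : IsSemisimpleRep (matConjRep n k H)) :
    IsSemisimpleRep (naturalRep n k H) :=
  stmt_12_general (hss.of_equiv (matConjRepEquivLinHom H))
end
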